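/- arXiv:2304.01270 — 2 statements merged into one kernel-verified Lean document; each statement's English description precedes it below -/
import Mathlib

section
/- Additivity of local ergotropy for a bipartite noninteracting system: let ρ be a density matrix indexed by Fin d_A × Fin d_B, let h_A, h_B be Hermitian matrices of the corresponding sizes, and H_{AB} := h_A ⊗ I + I ⊗ h_B. Then the local ergotropy ⨆_{(U,V) ∈ U(d_A) × U(d_B)} (re Tr[ρ H_{AB}] − re Tr[(U⊗V) ρ (U⊗V)† H_{AB}]) equals ℰ(ρ_A; h_A) + ℰ(ρ_B; h_B), where ρ_A and ρ_B are the reduced density matrices (ρ_A) i j := Σ_b ρ (i,b) (j,b) and (ρ_B) a b := Σ_i ρ (i,a) (i,b). -/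
/-!
By cyclicity of the trace the conjugation by `U ⊗ V` can be moved onto the Hamiltonian, where
`(U ⊗ V)† (h_A ⊗ 1 + 1 ⊗ h_B) (U ⊗ V) = U† h_A U ⊗ 1 + 1 ⊗ V† h_B V` by unitarity. Since
`Tr[ρ (X ⊗ 1)] = Tr[ρ_A X]` (`trace_mul_kronecker_one`) and symmetrically for `B`
(`trace_mul_one_kronecker`), the extracted work splits as `f U + g V`, with `f` and `g` the
objective functions of the two marginal ergotropies. The supremum of `f U + g V` over pairs is
the sum of the two suprema because both families are nonempty and bounded above
(`bddAbove_ergo`; the entries of a unitary have modulus at most one).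
-/

open Matrix Filter Topology
open scoped ComplexOrder Kronecker

noncomputable section

/-- A density matrix: positive semidefinite with unit trace. -/
def IsDensity {n : Type*} [Fintype n] [DecidableEq n] (ρ : Matrix n n ℂ) : Prop :=
  ρ.PosSemidef ∧ ρ.trace = 1

/-- The ergotropy `ℰ(ρ;H) = ⨆_{U ∈ U(d)} (re Tr[ρH] − re Tr[U ρ U† H])`. -/
def ergo {n : Type*} [Fintype n] [DecidableEq n] (ρ H : Matrix n n ℂ) : ℝ :=
  ⨆ U : Matrix.unitaryGroup n ℂ,
    ((ρ * H).trace.re -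
      ((U : Matrix n n ℂ) * ρ * star (U : Matrix n n ℂ) * H).trace.re)

/-- `N`-fold tensor power of a `d × d` matrix:
`ρ^{⊗N} f g = ∏_{i<N} ρ (f i) (g i)`. -/
def tpow {d : ℕ} (ρ : Matrix (Fin d) (Fin d) ℂ) (N : ℕ) :
    Matrix (Fin N → Fin d) (Fin N → Fin d) ℂ :=
  Matrix.of fun f g => ∏ i, ρ (f i) (g i)

/-- Tensor product `ρ₁ ⊗ ⋯ ⊗ ρₙ` of `n` single-site matrices. -/
def prodMat {d n : ℕ} (ρs : Fin n → Matrix (Fin d) (Fin d) ℂ) :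
    Matrix (Fin n → Fin d) (Fin n → Fin d) ℂ :=
  Matrix.of fun f g => ∏ i, ρs i (f i) (g i)

/-- Noninteracting `N`-site Hamiltonian:
`h^{(N)} f g = Σ_{i<N} h (f i) (g i) · ∏_{j≠i} (if f j = g j then 1 else 0)`. -/
def hSum {d : ℕ} (h : Matrix (Fin d) (Fin d) ℂ) (N : ℕ) :
    Matrix (Fin N → Fin d) (Fin N → Fin d) ℂ :=
  Matrix.of fun f g =>
    ∑ i, h (f i) (g i) * ∏ j ∈ Finset.univ.erase i, (if f j = g j then (1:ℂ) else 0)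

/-- The ampliation `Λ ⊗ id_k` of a linear map on `d × d` matrices. -/
def Ampliation {d : ℕ} (Λ : Matrix (Fin d) (Fin d) ℂ →ₗ[ℂ] Matrix (Fin d) (Fin d) ℂ)
    (k : ℕ) (M : Matrix (Fin d × Fin k) (Fin d × Fin k) ℂ) :
    Matrix (Fin d × Fin k) (Fin d × Fin k) ℂ :=
  Matrix.of fun p q => Λ (Matrix.of fun i' j' => M (i', p.2) (j', q.2)) p.1 q.1

/-- A quantum channel: a ℂ-linear, trace-preserving, completely positive map. -/
def IsChannel {d : ℕ} (Λ : Matrix (Fin d) (Fin d) ℂ →ₗ[ℂ] Matrix (Fin d) (Fin d) ℂ) : Prop :=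
  (∀ M, (Λ M).trace = M.trace) ∧
  ∀ k : ℕ, ∀ M : Matrix (Fin d × Fin k) (Fin d × Fin k) ℂ,
    M.PosSemidef → (Ampliation Λ k M).PosSemidef

/-- Local ergotropy of an `n`-site state: the supremum is restricted to
product unitaries `U₁ ⊗ ⋯ ⊗ Uₙ`. -/
def locErgo {d n : ℕ} (σ H : Matrix (Fin n → Fin d) (Fin n → Fin d) ℂ) : ℝ :=
  ⨆ U : Fin n → Matrix.unitaryGroup (Fin d) ℂ,
    ((σ * H).trace.re -
      ((prodMat fun i => (U i : Matrix (Fin d) (Fin d) ℂ)) * σ *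
        star (prodMat fun i => (U i : Matrix (Fin d) (Fin d) ℂ)) * H).trace.re)

/-- Von Neumann entropy `S(σ) = Σ_i −λ_i log λ_i` of a Hermitian matrix. -/
def vnEntropy {n : Type*} [Fintype n] [DecidableEq n]
    {σ : Matrix n n ℂ} (hσ : σ.IsHermitian) : ℝ :=
  ∑ i, Real.negMulLog (hσ.eigenvalues i)

/-- `i`-th single-site reduced density matrix of an `n`-site state. -/
def red {d n : ℕ} (ρ : Matrix (Fin n → Fin d) (Fin n → Fin d) ℂ) (i : Fin n) :
    Matrix (Fin d) (Fin d) ℂ :=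
  Matrix.of fun a b =>
    ∑ f ∈ Finset.univ.filter (fun f : Fin n → Fin d => f i = a), ρ f (Function.update f i b)

/-- Separability: `ρ` is a convex combination of product density matrices. -/
def SepState {d n : ℕ} (ρ : Matrix (Fin n → Fin d) (Fin n → Fin d) ℂ) : Prop :=
  ∃ (m : ℕ) (p : Fin m → ℝ) (σs : Fin m → Fin n → Matrix (Fin d) (Fin d) ℂ),
    (∀ k, 0 ≤ p k) ∧ (∑ k, p k = 1) ∧ (∀ k i, IsDensity (σs k i)) ∧
    ρ = ∑ k, (p k : ℂ) • prodMat (σs k)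

/-- Total ergotropy `ℰ_tot(σ;h) = ⨆_{N≥1} ℰ(σ^{⊗N}; h^{(N)})/N`. -/
def Etot {d : ℕ} (σ h : Matrix (Fin d) (Fin d) ℂ) : ℝ :=
  ⨆ N : ℕ+, ergo (tpow σ (N:ℕ)) (hSum h (N:ℕ)) / (N:ℕ)

/-- Largest eigenvalue of a Hermitian matrix. -/
def lamMax {d : ℕ} {h : Matrix (Fin d) (Fin d) ℂ} (hh : h.IsHermitian) : ℝ :=
  ⨆ i, hh.eigenvalues i

/-- Single-shot energy-constrained maximal output ergotropy `ℰ^{(1)}(Λ;e)`. -/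
def E1 {d : ℕ} (Λ : Matrix (Fin d) (Fin d) ℂ →ₗ[ℂ] Matrix (Fin d) (Fin d) ℂ)
    (h : Matrix (Fin d) (Fin d) ℂ) (e : ℝ) : ℝ :=
  sSup {x | ∃ ρ : Matrix (Fin d) (Fin d) ℂ,
    IsDensity ρ ∧ (ρ * h).trace.re ≤ e ∧ x = ergo (Λ ρ) h}

/-- Single-shot energy-constrained maximal output total ergotropy `ℰ_tot^{(1)}(Λ;e)`. -/
def E1tot {d : ℕ} (Λ : Matrix (Fin d) (Fin d) ℂ →ₗ[ℂ] Matrix (Fin d) (Fin d) ℂ)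
    (h : Matrix (Fin d) (Fin d) ℂ) (e : ℝ) : ℝ :=
  sSup {x | ∃ ρ : Matrix (Fin d) (Fin d) ℂ,
    IsDensity ρ ∧ (ρ * h).trace.re ≤ e ∧ x = Etot (Λ ρ) h}

/-- `χ(Λ;e)`: supremum of `Σ_j p_j ℰ^{(1)}(Λ;e_j)` over finite probability vectors
`(p_j)` and energies `e_j ∈ [0, lmax]` with `Σ_j p_j e_j ≤ e`. -/
def chi {d : ℕ} (Λ : Matrix (Fin d) (Fin d) ℂ →ₗ[ℂ] Matrix (Fin d) (Fin d) ℂ)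
    (h : Matrix (Fin d) (Fin d) ℂ) (lmax e : ℝ) : ℝ :=
  sSup {x | ∃ (m : ℕ) (p ev : Fin m → ℝ),
    (∀ j, 0 ≤ p j) ∧ (∑ j, p j = 1) ∧ (∀ j, ev j ∈ Set.Icc (0:ℝ) lmax) ∧
    (∑ j, p j * ev j ≤ e) ∧ x = ∑ j, p j * E1 Λ h (ev j)}

/-- `χ_tot(Λ;e)`: as `χ` but with the total ergotropy. -/
def chiTot {d : ℕ} (Λ : Matrix (Fin d) (Fin d) ℂ →ₗ[ℂ] Matrix (Fin d) (Fin d) ℂ)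
    (h : Matrix (Fin d) (Fin d) ℂ) (lmax e : ℝ) : ℝ :=
  sSup {x | ∃ (m : ℕ) (p ev : Fin m → ℝ),
    (∀ j, 0 ≤ p j) ∧ (∑ j, p j = 1) ∧ (∀ j, ev j ∈ Set.Icc (0:ℝ) lmax) ∧
    (∑ j, p j * ev j ≤ e) ∧ x = ∑ j, p j * E1tot Λ h (ev j)}

/-- `ℰ_loc^{(n)}(Λ;E)`. -/
def ElocN {d : ℕ}
    (Λfam : ∀ n : ℕ, Matrix (Fin n → Fin d) (Fin n → Fin d) ℂ →ₗ[ℂ]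
      Matrix (Fin n → Fin d) (Fin n → Fin d) ℂ)
    (h : Matrix (Fin d) (Fin d) ℂ) (n : ℕ) (E : ℝ) : ℝ :=
  sSup {x | ∃ ρ : Matrix (Fin n → Fin d) (Fin n → Fin d) ℂ,
    IsDensity ρ ∧ (ρ * hSum h n).trace.re ≤ E ∧ x = locErgo (Λfam n ρ) (hSum h n)}

/-- `ℰ_{loc,sep}^{(n)}(Λ;E)`. -/
def ElocSepN {d : ℕ}
    (Λfam : ∀ n : ℕ, Matrix (Fin n → Fin d) (Fin n → Fin d) ℂ →ₗ[ℂ]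
      Matrix (Fin n → Fin d) (Fin n → Fin d) ℂ)
    (h : Matrix (Fin d) (Fin d) ℂ) (n : ℕ) (E : ℝ) : ℝ :=
  sSup {x | ∃ ρ : Matrix (Fin n → Fin d) (Fin n → Fin d) ℂ,
    IsDensity ρ ∧ SepState ρ ∧ (ρ * hSum h n).trace.re ≤ E ∧
    x = locErgo (Λfam n ρ) (hSum h n)}

/-- `ℰ_sep^{(n)}(Λ;E)`. -/
def EsepN {d : ℕ}
    (Λfam : ∀ n : ℕ, Matrix (Fin n → Fin d) (Fin n → Fin d) ℂ →ₗ[ℂ]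
      Matrix (Fin n → Fin d) (Fin n → Fin d) ℂ)
    (h : Matrix (Fin d) (Fin d) ℂ) (n : ℕ) (E : ℝ) : ℝ :=
  sSup {x | ∃ ρ : Matrix (Fin n → Fin d) (Fin n → Fin d) ℂ,
    IsDensity ρ ∧ SepState ρ ∧ (ρ * hSum h n).trace.re ≤ E ∧
    x = ergo (Λfam n ρ) (hSum h n)}

lemma trace_mul_kronecker_one {m n : Type*} [Fintype m] [Fintype n] [DecidableEq n]
    (ρ : Matrix (m × n) (m × n) ℂ) (X : Matrix m m ℂ) :
    (ρ * (X ⊗ₖ (1 : Matrix n n ℂ))).trace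
      = ((Matrix.of fun i j => ∑ b, ρ (i, b) (j, b)) * X).trace := by
  simp only [Matrix.trace, Matrix.diag_apply, Matrix.mul_apply, Fintype.sum_prod_type,
    Matrix.kroneckerMap_apply, Matrix.one_apply, Matrix.of_apply, mul_ite, mul_one, mul_zero,
    Finset.sum_ite_eq', Finset.mem_univ, if_true, Finset.sum_mul]
  exact Finset.sum_congr rfl fun i _ => Finset.sum_comm

lemma trace_mul_one_kronecker {m n : Type*} [Fintype m] [Fintype n] [DecidableEq m]
    (ρ : Matrix (m × n) (m × n) ℂ) (Y : Matrix n n ℂ) :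
    (ρ * ((1 : Matrix m m ℂ) ⊗ₖ Y)).trace
      = ((Matrix.of fun a b => ∑ i, ρ (i, a) (i, b)) * Y).trace := by
  simp only [Matrix.trace, Matrix.diag_apply, Matrix.mul_apply, Fintype.sum_prod_type_right,
    Matrix.kroneckerMap_apply, Matrix.one_apply, Matrix.of_apply, ite_mul, one_mul, zero_mul,
    mul_ite, mul_zero, Finset.sum_ite_eq', Finset.mem_univ, if_true, Finset.sum_mul]
  exact Finset.sum_congr rfl fun i _ => Finset.sum_comm

lemma trace_conj_eq {n : Type*} [Fintype n] (U ρ H : Matrix n n ℂ) :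
    (U * ρ * star U * H).trace = (ρ * (star U * H * U)).trace := by
  rw [Matrix.mul_assoc, Matrix.mul_assoc, Matrix.trace_mul_comm]
  simp only [Matrix.mul_assoc]

lemma kronecker_conj_add {m n : Type*} [Fintype m] [Fintype n] [DecidableEq m] [DecidableEq n]
    (U : Matrix.unitaryGroup m ℂ) (V : Matrix.unitaryGroup n ℂ)
    (X : Matrix m m ℂ) (Y : Matrix n n ℂ) :
    star ((U : Matrix m m ℂ) ⊗ₖ (V : Matrix n n ℂ)) * (X ⊗ₖ (1 : Matrix n n ℂ)
        + (1 : Matrix m m ℂ) ⊗ₖ Y) * ((U : Matrix m m ℂ) ⊗ₖ (V : Matrix n n ℂ))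
      = (star (U : Matrix m m ℂ) * X * (U : Matrix m m ℂ)) ⊗ₖ (1 : Matrix n n ℂ)
        + (1 : Matrix m m ℂ) ⊗ₖ (star (V : Matrix n n ℂ) * Y * (V : Matrix n n ℂ)) := by
  have hU : star (U : Matrix m m ℂ) * U = 1 := Matrix.UnitaryGroup.star_mul_self U
  have hV : star (V : Matrix n n ℂ) * V = 1 := Matrix.UnitaryGroup.star_mul_self V
  have hs : star ((U : Matrix m m ℂ) ⊗ₖ (V : Matrix n n ℂ))
      = star (U : Matrix m m ℂ) ⊗ₖ star (V : Matrix n n ℂ) := by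
    simp only [Matrix.star_eq_conjTranspose, Matrix.conjTranspose_kronecker]
  rw [hs, Matrix.mul_add, Matrix.add_mul]
  simp only [← Matrix.mul_kronecker_mul, Matrix.mul_one, hU, hV]

lemma bddAbove_ergo {n : Type*} [Fintype n] [DecidableEq n] (ρ H : Matrix n n ℂ) :
    BddAbove (Set.range fun U : Matrix.unitaryGroup n ℂ =>
      ((ρ * H).trace.re -
        ((U : Matrix n n ℂ) * ρ * star (U : Matrix n n ℂ) * H).trace.re)) := by
  refine ⟨(ρ * H).trace.re + ∑ i, ∑ l, (∑ k, (∑ j, ‖ρ j k‖)) * ‖H l i‖, ?_⟩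
  rintro _ ⟨U, rfl⟩
  have key : ‖((U : Matrix n n ℂ) * ρ * star (U : Matrix n n ℂ) * H).trace‖
      ≤ ∑ i, ∑ l, (∑ k, (∑ j, ‖ρ j k‖)) * ‖H l i‖ := by
    simp only [Matrix.trace, Matrix.diag_apply, Matrix.mul_apply, Matrix.star_apply]
    refine norm_sum_le_of_le _ fun i _ => norm_sum_le_of_le _ fun l _ => ?_
    rw [norm_mul]
    refine mul_le_mul_of_nonneg_right ?_ (norm_nonneg _)
    refine norm_sum_le_of_le _ fun k _ => ?_
    rw [norm_mul, norm_star]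
    refine (mul_le_of_le_one_right (norm_nonneg _) (entry_norm_bound_of_unitary U.2 l k)).trans ?_
    refine norm_sum_le_of_le _ fun j _ => ?_
    rw [norm_mul]
    exact mul_le_of_le_one_left (norm_nonneg _) (entry_norm_bound_of_unitary U.2 i j)
  have := (abs_le.mp (Complex.abs_re_le_norm
    ((U : Matrix n n ℂ) * ρ * star (U : Matrix n n ℂ) * H).trace)).1
  dsimp only
  linarith

lemma ciSup_prod_add {ι κ : Type*} [Nonempty ι] [Nonempty κ] {f : ι → ℝ} {g : κ → ℝ}
    (hf : BddAbove (Set.range f)) (hg : BddAbove (Set.range g)) :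
    (⨆ p : ι × κ, (f p.1 + g p.2)) = (⨆ i, f i) + ⨆ k, g k := by
  have hle : ∀ p : ι × κ, f p.1 + g p.2 ≤ (⨆ i, f i) + ⨆ k, g k :=
    fun p => add_le_add (le_ciSup hf _) (le_ciSup hg _)
  refine le_antisymm (ciSup_le hle) (ciSup_add_ciSup_le fun i k => ?_)
  exact le_ciSup (f := fun p : ι × κ => f p.1 + g p.2) ⟨_, Set.forall_mem_range.2 hle⟩ (i, k)

theorem statement7 {dA dB : ℕ} (ρ : Matrix (Fin dA × Fin dB) (Fin dA × Fin dB) ℂ)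
    (hρ : IsDensity ρ)
    (hA : Matrix (Fin dA) (Fin dA) ℂ) (hB : Matrix (Fin dB) (Fin dB) ℂ)
    (hhA : hA.IsHermitian) (hhB : hB.IsHermitian) :
    (⨆ UV : Matrix.unitaryGroup (Fin dA) ℂ × Matrix.unitaryGroup (Fin dB) ℂ,
      ((ρ * (hA ⊗ₖ (1 : Matrix (Fin dB) (Fin dB) ℂ)
          + (1 : Matrix (Fin dA) (Fin dA) ℂ) ⊗ₖ hB)).trace.re -
        (((UV.1 : Matrix (Fin dA) (Fin dA) ℂ) ⊗ₖ (UV.2 : Matrix (Fin dB) (Fin dB) ℂ)) * ρ *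
          star ((UV.1 : Matrix (Fin dA) (Fin dA) ℂ) ⊗ₖ (UV.2 : Matrix (Fin dB) (Fin dB) ℂ)) *
          (hA ⊗ₖ (1 : Matrix (Fin dB) (Fin dB) ℂ)
            + (1 : Matrix (Fin dA) (Fin dA) ℂ) ⊗ₖ hB)).trace.re))
    = ergo (Matrix.of fun i j => ∑ b, ρ (i, b) (j, b)) hA
      + ergo (Matrix.of fun a b => ∑ i, ρ (i, a) (i, b)) hB := by
  unfold ergo
  rw [← ciSup_prod_add (bddAbove_ergo _ _) (bddAbove_ergo _ _)]
  refine iSup_congr fun UV => ?_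
  rw [trace_conj_eq, trace_conj_eq, trace_conj_eq, kronecker_conj_add]
  simp only [Matrix.mul_add, Matrix.trace_add, Complex.add_re, trace_mul_kronecker_one,
    trace_mul_one_kronecker]
  ring

end
end

section
/- Corollary 2: let Λ be a quantum channel on d×d complex matrices, h a positive semidefinite Hermitian d×d matrix, and 𝔢 ∈ [0, λ_max(h)]. Suppose that for every e ∈ [0, λ_max(h)] and every n ≥ 1 there exists a d×d density matrix σ (possibly depending on n) with re Tr[σ h] ≤ e such that for all unit vectors ψ_1, …, ψ_n ∈ ℂ^d with Σ_{i} ⟨ψ_i, h ψ_i⟩ ≤ n e one has ℰ(Λ^{⊗n}(|ψ_1⟩⟨ψ_1| ⊗ ⋯ ⊗ |ψ_n⟩⟨ψ_n|); h^{(n)}) ≤ ℰ((Λ(σ))^{⊗n}; h^{(n)}). Then the sequence n ↦ ℰ_sep^{(n)}(Λ; n𝔢)/n converges to χ_tot(Λ;𝔢). -/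
/-!
The limit is squeezed between two bounds, both resting on elementary properties of ergotropy for
positive semidefinite arguments: it is nonnegative, at most the energy, convex in the state
(`ergo_convex`), and superadditive on tensor products with noninteracting Hamiltonians
(`ergo_append`), since product unitaries are among the admissible ones.

Upper bound, for every `n ≥ 1` (`ergo_sep_le`). A separable state is a mixture of pure product
states with weights `p k` and mean energies per site `ev k ∈ [0, λ_max]`, whose average is at most
`𝔢`. By convexity its output ergotropy is at most the average of those of the pure product states,
and by hypothesis each of these is at most the ergotropy of `(Λ σ)^{⊗n}` for some `σ` of energy at
most `ev k`, hence at most `n * E1tot Λ h (ev k)`. Averaging gives `n * chiTot`.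

Lower bound, asymptotically. Take an ensemble `(p j, ev j)` nearly attaining `chiTot`, and states
`ρ j` of energy at most `ev j` nearly attaining `E1tot Λ h (ev j)`. On `n` sites put `⌊p j n⌋`
copies of each `ρ j` and fill up with a zero-energy state, which exists by the hypothesis at
`e = 0`. This deterministic product state obeys the energy constraint (`exists_sep_ge`), and its
output ergotropy is at least the sum of those of the blocks. Superadditivity and Fekete's lemma give
`ergo ((Λ ρ)^{⊗N}) / N → Etot (Λ ρ)` (`tendsto_ergo_tpow`), so per site this sum tends to
`∑ j, p j * Etot (Λ (ρ j))`.
-/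

open Matrix Filter Topology
open scoped ComplexOrder Kronecker

noncomputable section

/-! ### Positivity and trace facts -/

open scoped MatrixOrder in
lemma exists_factor {n : Type*} [Fintype n] [DecidableEq n] {A : Matrix n n ℂ}
    (hA : A.PosSemidef) : ∃ B : Matrix n n ℂ, A = Bᴴ * B := by
  obtain ⟨B, hB⟩ := CStarAlgebra.nonneg_iff_eq_star_mul_self.mp
    (Matrix.nonneg_iff_posSemidef.mpr hA)
  exact ⟨B, hB⟩

lemma trace_mul_re_nonneg {n : Type*} [Fintype n] [DecidableEq n] {A B : Matrix n n ℂ}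
    (hA : A.PosSemidef) (hB : B.PosSemidef) : 0 ≤ (A * B).trace.re := by
  obtain ⟨C, rfl⟩ := exists_factor hA
  rw [Matrix.mul_assoc, Matrix.trace_mul_comm]
  exact (Complex.nonneg_iff.mp (hB.mul_mul_conjTranspose_same C).trace_nonneg).1

lemma lamMax_smul_sub_posSemidef {d : ℕ} {h : Matrix (Fin d) (Fin d) ℂ} (hh : h.IsHermitian) :
    (((lamMax hh : ℝ) : ℂ) • (1 : Matrix (Fin d) (Fin d) ℂ) - h).PosSemidef := by
  set U : Matrix (Fin d) (Fin d) ℂ := (hh.eigenvectorUnitary).1 with hU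
  have hUU : U * star U = 1 := Unitary.coe_mul_star_self hh.eigenvectorUnitary
  have hs : h = U * diagonal (fun i => (hh.eigenvalues i : ℂ)) * star U := by
    conv_lhs => rw [hh.spectral_theorem, Unitary.conjStarAlgAut_apply]
    rfl
  have key : (((lamMax hh : ℝ) : ℂ) • (1 : Matrix (Fin d) (Fin d) ℂ) - h) =
      U * diagonal (fun i => ((lamMax hh - hh.eigenvalues i : ℝ) : ℂ)) * Uᴴ := by
    have : diagonal (fun i => ((lamMax hh - hh.eigenvalues i : ℝ) : ℂ)) =
        ((lamMax hh : ℝ) : ℂ) • (1 : Matrix (Fin d) (Fin d) ℂ) -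
          diagonal (fun i => (hh.eigenvalues i : ℂ)) := by
      ext i j
      by_cases hij : i = j
      · subst hij; simp
      · simp [hij]
    rw [this, Matrix.mul_sub, Matrix.sub_mul, ← star_eq_conjTranspose, ← hs]
    simp [hUU]
  rw [key]
  refine PosSemidef.mul_mul_conjTranspose_same (PosSemidef.diagonal fun i => ?_) U
  have := le_ciSup (Set.finite_range hh.eigenvalues).bddAbove i
  simpa [lamMax] using this

/-- The energy of a state never exceeds the largest eigenvalue. -/
lemma energy_le {d : ℕ} {h ρ : Matrix (Fin d) (Fin d) ℂ} (hh : h.IsHermitian)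
    (hρ : IsDensity ρ) : (ρ * h).trace.re ≤ lamMax hh := by
  have := trace_mul_re_nonneg hρ.1 (lamMax_smul_sub_posSemidef hh)
  rw [Matrix.mul_sub, Matrix.trace_sub] at this
  simpa [hρ.2] using this

/-- Pure-state decomposition: eigenvectors and eigenvalues of a density matrix. -/
lemma exists_pure_decomp {d : ℕ} {ρ : Matrix (Fin d) (Fin d) ℂ} (hρ : IsDensity ρ) :
    ∃ (w : Fin d → ℝ) (v : Fin d → Fin d → ℂ), (∀ a, 0 ≤ w a) ∧ ∑ a, w a = 1 ∧
      (∀ a, star (v a) ⬝ᵥ v a = 1) ∧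
      ρ = ∑ a, (w a : ℂ) • vecMulVec (v a) (star (v a)) := by
  have hh := hρ.1.isHermitian
  set U : Matrix (Fin d) (Fin d) ℂ := (hh.eigenvectorUnitary).1 with hU
  have hUU : star U * U = 1 := Unitary.coe_star_mul_self hh.eigenvectorUnitary
  have hs : ρ = U * diagonal (fun i => (hh.eigenvalues i : ℂ)) * star U := by
    conv_lhs => rw [hh.spectral_theorem, Unitary.conjStarAlgAut_apply]
    rfl
  refine ⟨hh.eigenvalues, fun a i => U i a, hρ.1.eigenvalues_nonneg, ?_, fun a => ?_, ?_⟩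
  · have h1 := hh.trace_eq_sum_eigenvalues
    rw [hρ.2] at h1
    have := congrArg Complex.re h1
    simpa using this.symm
  · have := congrFun (congrFun hUU a) a
    simpa [Matrix.mul_apply, dotProduct] using this
  · conv_lhs => rw [hs]
    ext i j
    rw [Matrix.mul_apply]
    simp only [Matrix.sum_apply, Matrix.smul_apply, vecMulVec_apply,
      Matrix.star_apply, Pi.star_apply, Matrix.mul_diagonal, smul_eq_mul]
    exact Finset.sum_congr rfl fun a _ => by ring

lemma isDensity_pure {d : ℕ} {v : Fin d → ℂ} (hv : star v ⬝ᵥ v = 1) :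
    IsDensity (vecMulVec v (star v)) := by
  refine ⟨posSemidef_vecMulVec_self_star v, ?_⟩
  rw [trace_vecMulVec, dotProduct_comm, hv]

lemma trace_pure_mul {d : ℕ} (v : Fin d → ℂ) (h : Matrix (Fin d) (Fin d) ℂ) :
    (vecMulVec v (star v) * h).trace = star v ⬝ᵥ h.mulVec v := by
  rw [Matrix.trace_mul_comm, Matrix.mul_vecMulVec, trace_vecMulVec, dotProduct_comm]

lemma IsChannel.isDensity {d : ℕ}
    {Λ : Matrix (Fin d) (Fin d) ℂ →ₗ[ℂ] Matrix (Fin d) (Fin d) ℂ} (hΛ : IsChannel Λ)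
    {ρ : Matrix (Fin d) (Fin d) ℂ} (hρ : IsDensity ρ) : IsDensity (Λ ρ) := by
  refine ⟨?_, by rw [hΛ.1, hρ.2]⟩
  have h1 := hΛ.2 1 (ρ.submatrix Prod.fst Prod.fst) (hρ.1.submatrix _)
  exact h1.submatrix (fun i => (i, 0))

/-! ### Tensor products -/

section Tensor

variable {d : ℕ}

lemma prodMat_mul {n : ℕ} (A B : Fin n → Matrix (Fin d) (Fin d) ℂ) :
    prodMat A * prodMat B = prodMat fun i => A i * B i := by
  ext f g
  simp only [prodMat, Matrix.mul_apply, Matrix.of_apply, ← Finset.prod_mul_distrib]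
  rw [Finset.prod_univ_sum]
  simp

lemma prodMat_conjTranspose {n : ℕ} (A : Fin n → Matrix (Fin d) (Fin d) ℂ) :
    (prodMat A)ᴴ = prodMat fun i => (A i)ᴴ := by
  ext f g
  simp [prodMat, Matrix.conjTranspose_apply]

lemma prodMat_one {n : ℕ} : prodMat (fun _ : Fin n => (1 : Matrix (Fin d) (Fin d) ℂ)) = 1 := by
  ext f g
  simp only [prodMat, Matrix.of_apply, Matrix.one_apply, Finset.prod_ite_zero, Finset.prod_const_one,
    Finset.mem_univ, forall_true_left, funext_iff]

lemma trace_prodMat {n : ℕ} (A : Fin n → Matrix (Fin d) (Fin d) ℂ) :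
    (prodMat A).trace = ∏ i, (A i).trace := by
  simp only [prodMat, Matrix.trace, Matrix.diag, Matrix.of_apply]
  rw [Finset.prod_univ_sum]
  simp

lemma prodMat_posSemidef {n : ℕ} {A : Fin n → Matrix (Fin d) (Fin d) ℂ}
    (hA : ∀ i, (A i).PosSemidef) : (prodMat A).PosSemidef := by
  choose B hB using fun i => exists_factor (hA i)
  have : prodMat A = (prodMat B)ᴴ * prodMat B := by
    rw [prodMat_conjTranspose, prodMat_mul]
    exact congrArg _ (funext hB)
  rw [this]
  exact posSemidef_conjTranspose_mul_self _

lemma prodMat_isDensity {n : ℕ} {A : Fin n → Matrix (Fin d) (Fin d) ℂ}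
    (hA : ∀ i, IsDensity (A i)) : IsDensity (prodMat A) :=
  ⟨prodMat_posSemidef fun i => (hA i).1, by
    rw [trace_prodMat]; exact Finset.prod_eq_one fun i _ => (hA i).2⟩

/-- Multilinearity of the tensor product, expanding each factor into a weighted sum. -/
lemma prodMat_sum {n : ℕ} (w : Fin n → Fin d → ℝ)
    (P : Fin n → Fin d → Matrix (Fin d) (Fin d) ℂ) :
    prodMat (fun i => ∑ a, (w i a : ℂ) • P i a) =
      ∑ c : Fin n → Fin d, ((∏ i, w i (c i) : ℝ) : ℂ) • prodMat fun i => P i (c i) := by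
  ext f g
  simp only [prodMat, Matrix.of_apply, Matrix.sum_apply, Matrix.smul_apply, smul_eq_mul]
  rw [Finset.prod_univ_sum]
  simp [Finset.prod_mul_distrib]

lemma hSum_eq (h : Matrix (Fin d) (Fin d) ℂ) (n : ℕ) :
    hSum h n = ∑ i, prodMat (Function.update (fun _ => 1) i h) := by
  ext f g
  simp only [hSum, prodMat, Matrix.of_apply, Matrix.sum_apply]
  refine Finset.sum_congr rfl fun i _ => ?_
  rw [← Finset.mul_prod_erase _ _ (Finset.mem_univ i), Function.update_self]
  congr 1
  refine Finset.prod_congr rfl fun j hj => ?_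
  rw [Function.update_of_ne (Finset.ne_of_mem_erase hj), Matrix.one_apply]

lemma hSum_posSemidef {h : Matrix (Fin d) (Fin d) ℂ} (hh : h.PosSemidef) (n : ℕ) :
    (hSum h n).PosSemidef := by
  rw [hSum_eq]
  refine Matrix.posSemidef_sum _ fun i _ => prodMat_posSemidef fun j => ?_
  by_cases hj : j = i
  · subst hj; simpa using hh
  · rw [Function.update_of_ne hj]; exact PosSemidef.one

lemma trace_prodMat_mul_hSum {n : ℕ} {A : Fin n → Matrix (Fin d) (Fin d) ℂ}
    (hA : ∀ i, IsDensity (A i)) (h : Matrix (Fin d) (Fin d) ℂ) :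
    (prodMat A * hSum h n).trace = ∑ i, (A i * h).trace := by
  rw [hSum_eq, Matrix.mul_sum, Matrix.trace_sum]
  refine Finset.sum_congr rfl fun i _ => ?_
  rw [prodMat_mul, trace_prodMat, ← Finset.mul_prod_erase _ _ (Finset.mem_univ i),
    Function.update_self, Finset.prod_eq_one, mul_one]
  intro j hj
  rw [Function.update_of_ne (Finset.ne_of_mem_erase hj), Matrix.mul_one, (hA j).2]

lemma prodMat_append {m n : ℕ} (A : Fin m → Matrix (Fin d) (Fin d) ℂ)
    (B : Fin n → Matrix (Fin d) (Fin d) ℂ) :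
    prodMat (Fin.append A B) =
      (prodMat A ⊗ₖ prodMat B).submatrix (Fin.appendEquiv m n).symm (Fin.appendEquiv m n).symm := by
  ext f g
  simp [prodMat, Fin.prod_univ_add, Fin.appendEquiv]

lemma hSum_add (h : Matrix (Fin d) (Fin d) ℂ) (m n : ℕ) :
    hSum h (m + n) = (hSum h m ⊗ₖ 1 + 1 ⊗ₖ hSum h n).submatrix
      (Fin.appendEquiv m n).symm (Fin.appendEquiv m n).symm := by
  have h1 (i : Fin m) : Function.update (fun _ : Fin (m + n) => 1) (Fin.castAdd n i) h =
      Fin.append (Function.update (fun _ => 1) i h)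
        (fun _ : Fin n => (1 : Matrix (Fin d) (Fin d) ℂ)) := by
    rw [← Fin.append_castAdd_natAdd (f := Function.update _ _ _)]
    congr 1 <;> funext j
    · by_cases hj : j = i
      · subst hj; simp
      · rw [Function.update_of_ne hj, Function.update_of_ne (by simpa using hj)]
    · rw [Function.update_of_ne]
      simp [Fin.ext_iff]; omega
  have h2 (i : Fin n) : Function.update (fun _ : Fin (m + n) => 1) (Fin.natAdd m i) h =
      Fin.append (fun _ : Fin m => (1 : Matrix (Fin d) (Fin d) ℂ))
        (Function.update (fun _ => 1) i h) := by
    rw [← Fin.append_castAdd_natAdd (f := Function.update _ _ _)]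
    congr 1 <;> funext j
    · rw [Function.update_of_ne]
      simp [Fin.ext_iff]; omega
    · by_cases hj : j = i
      · subst hj; simp
      · rw [Function.update_of_ne hj, Function.update_of_ne (by simpa using hj)]
  rw [hSum_eq, Fin.sum_univ_add]
  simp only [h1, h2, prodMat_append, prodMat_one, hSum_eq h m, hSum_eq h n]
  ext f g
  simp [Matrix.sum_apply, Finset.sum_mul, Finset.mul_sum]

end Tensor

/-! ### Ergotropy: nonnegativity, energy bound, convexity, superadditivity -/

section Ergo

lemma ergo_term_le {n : Type*} [Fintype n] [DecidableEq n] {ρ H : Matrix n n ℂ}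
    (hρ : ρ.PosSemidef) (hH : H.PosSemidef) (U : Matrix.unitaryGroup n ℂ) :
    (ρ * H).trace.re - ((U : Matrix n n ℂ) * ρ * star (U : Matrix n n ℂ) * H).trace.re ≤
      (ρ * H).trace.re := by
  have := trace_mul_re_nonneg (hρ.mul_mul_conjTranspose_same (U : Matrix n n ℂ)) hH
  rw [← star_eq_conjTranspose] at this
  linarith

lemma ergo_bddAbove {n : Type*} [Fintype n] [DecidableEq n] {ρ H : Matrix n n ℂ}
    (hρ : ρ.PosSemidef) (hH : H.PosSemidef) :
    BddAbove (Set.range fun U : Matrix.unitaryGroup n ℂ => (ρ * H).trace.re -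
      ((U : Matrix n n ℂ) * ρ * star (U : Matrix n n ℂ) * H).trace.re) :=
  ⟨(ρ * H).trace.re, by rintro _ ⟨U, rfl⟩; exact ergo_term_le hρ hH U⟩

lemma ergo_le_energy {n : Type*} [Fintype n] [DecidableEq n] {ρ H : Matrix n n ℂ}
    (hρ : ρ.PosSemidef) (hH : H.PosSemidef) : ergo ρ H ≤ (ρ * H).trace.re :=
  ciSup_le fun U => ergo_term_le hρ hH U

/-- Holds for all matrices: an unbounded supremum has the junk value `0`. -/
lemma ergo_nonneg {n : Type*} [Fintype n] [DecidableEq n] (ρ H : Matrix n n ℂ) :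
    0 ≤ ergo ρ H := by
  by_cases hb : BddAbove (Set.range fun U : Matrix.unitaryGroup n ℂ => (ρ * H).trace.re -
      ((U : Matrix n n ℂ) * ρ * star (U : Matrix n n ℂ) * H).trace.re)
  · have := le_ciSup hb 1
    simpa [ergo] using this
  · rw [ergo, Real.iSup_of_not_bddAbove hb]

lemma ergo_convex {n : Type*} [Fintype n] [DecidableEq n] {ι : Type*} [Fintype ι]
    {p : ι → ℝ} (hp : ∀ k, 0 ≤ p k) {ρ : ι → Matrix n n ℂ} {H : Matrix n n ℂ}
    (hρ : ∀ k, (ρ k).PosSemidef) (hH : H.PosSemidef) :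
    ergo (∑ k, (p k : ℂ) • ρ k) H ≤ ∑ k, p k * ergo (ρ k) H := by
  refine ciSup_le fun U => ?_
  have : ((∑ k, (p k : ℂ) • ρ k) * H).trace.re -
      ((U : Matrix n n ℂ) * (∑ k, (p k : ℂ) • ρ k) * star (U : Matrix n n ℂ) * H).trace.re =
      ∑ k, p k * ((ρ k * H).trace.re -
        ((U : Matrix n n ℂ) * ρ k * star (U : Matrix n n ℂ) * H).trace.re) := by
    simp only [Matrix.sum_mul, Matrix.mul_sum, Matrix.trace_sum, Matrix.smul_mul, Matrix.mul_smul,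
      Matrix.trace_smul, Complex.re_sum, smul_eq_mul, Complex.re_ofReal_mul, mul_sub,
      Finset.sum_sub_distrib]
  rw [this]
  exact Finset.sum_le_sum fun k _ =>
    mul_le_mul_of_nonneg_left (le_ciSup (ergo_bddAbove (hρ k) hH) U) (hp k)

lemma ergo_le_ergo_submatrix {m n : Type*} [Fintype m] [DecidableEq m] [Fintype n]
    [DecidableEq n] (e : m ≃ n) {ρ H : Matrix n n ℂ}
    (hρ : ρ.PosSemidef) (hH : H.PosSemidef) :
    ergo ρ H ≤ ergo (ρ.submatrix e e) (H.submatrix e e) := by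
  have htr (A : Matrix n n ℂ) : (A.submatrix e e).trace = A.trace := by
    simp only [Matrix.trace, Matrix.diag, Matrix.submatrix_apply]
    exact e.sum_comp fun i => A i i
  refine ciSup_le fun U => ?_
  have hV : (U : Matrix n n ℂ).submatrix e e ∈ Matrix.unitaryGroup m ℂ := by
    rw [Matrix.mem_unitaryGroup_iff, star_eq_conjTranspose, conjTranspose_submatrix,
      Matrix.submatrix_mul_equiv, ← star_eq_conjTranspose,
      Matrix.mem_unitaryGroup_iff.mp U.2, Matrix.submatrix_one_equiv]
  have := le_ciSup (ergo_bddAbove (hρ.submatrix e) (hH.submatrix e)) ⟨_, hV⟩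
  refine le_trans (le_of_eq ?_) this
  simp only [star_eq_conjTranspose, conjTranspose_submatrix, Matrix.submatrix_mul_equiv, htr]

/-- Acting with product unitaries shows that ergotropy is superadditive on product states with
noninteracting Hamiltonians. -/
lemma ergo_add_le_kronecker {m n : Type*} [Fintype m] [DecidableEq m] [Fintype n]
    [DecidableEq n] {ρ H : Matrix m m ℂ} {τ K : Matrix n n ℂ}
    (hρ : IsDensity ρ) (hτ : IsDensity τ) (hH : H.PosSemidef) (hK : K.PosSemidef) :
    ergo ρ H + ergo τ K ≤ ergo (ρ ⊗ₖ τ) (H ⊗ₖ 1 + 1 ⊗ₖ K) := by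
  have hb := ergo_bddAbove (hρ.1.kronecker hτ.1)
    ((hH.kronecker (PosSemidef.one (n := n))).add ((PosSemidef.one (n := m)).kronecker hK))
  rw [← le_sub_iff_add_le]
  refine ciSup_le fun U => ?_
  rw [le_sub_iff_add_le, add_comm, ← le_sub_iff_add_le]
  refine ciSup_le fun V => ?_
  rw [le_sub_iff_add_le]
  refine le_trans (le_of_eq ?_) (le_ciSup hb ⟨_, kronecker_mem_unitary U.2 V.2⟩)
  have hU : ((U : Matrix m m ℂ) * ρ * star (U : Matrix m m ℂ)).trace = 1 := by
    rw [Matrix.trace_mul_comm, ← Matrix.mul_assoc, Unitary.coe_star_mul_self, Matrix.one_mul, hρ.2]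
  have hV : ((V : Matrix n n ℂ) * τ * star (V : Matrix n n ℂ)).trace = 1 := by
    rw [Matrix.trace_mul_comm, ← Matrix.mul_assoc, Unitary.coe_star_mul_self, Matrix.one_mul, hτ.2]
  simp only [star_eq_conjTranspose] at hU hV ⊢
  simp only [conjTranspose_kronecker, ← mul_kronecker_mul, Matrix.mul_add,
    Matrix.trace_add, trace_kronecker, hU, hV, hρ.2, hτ.2, mul_one, one_mul,
    Complex.add_re]
  ring

variable {d : ℕ} {h : Matrix (Fin d) (Fin d) ℂ}

lemma ergo_append (hps : h.PosSemidef) {m n : ℕ} {A : Fin m → Matrix (Fin d) (Fin d) ℂ}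
    {B : Fin n → Matrix (Fin d) (Fin d) ℂ} (hA : ∀ i, IsDensity (A i))
    (hB : ∀ i, IsDensity (B i)) :
    ergo (prodMat A) (hSum h m) + ergo (prodMat B) (hSum h n) ≤
      ergo (prodMat (Fin.append A B)) (hSum h (m + n)) := by
  have hm := hSum_posSemidef hps m
  have hn := hSum_posSemidef hps n
  refine (ergo_add_le_kronecker (prodMat_isDensity hA) (prodMat_isDensity hB) hm hn).trans ?_
  rw [prodMat_append, hSum_add]
  exact ergo_le_ergo_submatrix _
    ((prodMat_posSemidef fun i => (hA i).1).kronecker (prodMat_posSemidef fun i => (hB i).1))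
    ((hm.kronecker PosSemidef.one).add (PosSemidef.one.kronecker hn))

lemma ergo_prodMat_le (hps : h.PosSemidef) {n : ℕ} {A : Fin n → Matrix (Fin d) (Fin d) ℂ}
    (hA : ∀ i, IsDensity (A i)) :
    ergo (prodMat A) (hSum h n) ≤ n * lamMax hps.isHermitian := by
  refine (ergo_le_energy (prodMat_posSemidef fun i => (hA i).1) (hSum_posSemidef hps n)).trans ?_
  rw [trace_prodMat_mul_hSum hA, Complex.re_sum]
  refine (Finset.sum_le_sum fun i _ => energy_le hps.isHermitian (hA i)).trans ?_
  simp

lemma tpow_eq_prodMat (σ : Matrix (Fin d) (Fin d) ℂ) (n : ℕ) :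
    tpow σ n = prodMat fun _ => σ := rfl

lemma ergo_tpow_div_le (hps : h.PosSemidef) {σ : Matrix (Fin d) (Fin d) ℂ} (hσ : IsDensity σ)
    {n : ℕ} (hn : 0 < n) : ergo (tpow σ n) (hSum h n) / n ≤ lamMax hps.isHermitian := by
  rw [div_le_iff₀ (by exact_mod_cast hn), mul_comm]
  exact ergo_prodMat_le hps fun _ => hσ

end Ergo

/-! ### Total ergotropy -/

section Total

variable {d : ℕ} {h : Matrix (Fin d) (Fin d) ℂ}

lemma Etot_bddAbove (hps : h.PosSemidef) {σ : Matrix (Fin d) (Fin d) ℂ} (hσ : IsDensity σ) :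
    BddAbove (Set.range fun N : ℕ+ => ergo (tpow σ (N : ℕ)) (hSum h (N : ℕ)) / (N : ℕ)) :=
  ⟨lamMax hps.isHermitian, by rintro _ ⟨N, rfl⟩; exact ergo_tpow_div_le hps hσ N.pos⟩

lemma Etot_le (hps : h.PosSemidef) {σ : Matrix (Fin d) (Fin d) ℂ} (hσ : IsDensity σ) :
    Etot σ h ≤ lamMax hps.isHermitian :=
  ciSup_le fun N => ergo_tpow_div_le hps hσ N.pos

lemma Etot_nonneg (σ : Matrix (Fin d) (Fin d) ℂ) : 0 ≤ Etot σ h :=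
  Real.iSup_nonneg fun _ => div_nonneg (ergo_nonneg _ _) (Nat.cast_nonneg _)

lemma ergo_tpow_le_Etot (hps : h.PosSemidef) {σ : Matrix (Fin d) (Fin d) ℂ} (hσ : IsDensity σ)
    {n : ℕ} (hn : 0 < n) : ergo (tpow σ n) (hSum h n) ≤ n * Etot σ h := by
  have := le_ciSup (Etot_bddAbove hps hσ) ⟨n, hn⟩
  rw [mul_comm]
  exact (div_le_iff₀ (by exact_mod_cast hn)).mp this

/-- Fekete's lemma: the supremum defining the total ergotropy is a limit. -/
lemma tendsto_ergo_tpow (hps : h.PosSemidef) {σ : Matrix (Fin d) (Fin d) ℂ}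
    (hσ : IsDensity σ) :
    Tendsto (fun n : ℕ => ergo (tpow σ n) (hSum h n) / n) atTop (𝓝 (Etot σ h)) := by
  have hsub : Subadditive fun n : ℕ => -ergo (tpow σ n) (hSum h n) := by
    intro m n
    have := ergo_append hps (m := m) (n := n) (fun _ => hσ) (fun _ => hσ)
    have happ : Fin.append (fun _ : Fin m => σ) (fun _ : Fin n => σ) = fun _ => σ := by
      funext i
      refine Fin.addCases (fun i => ?_) (fun i => ?_) i <;> simp
    rw [happ] at this
    simp only [tpow_eq_prodMat]
    linarith
  refine tendsto_order.2 ⟨fun c hc => ?_, fun c hc => ?_⟩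
  · obtain ⟨N, hN⟩ := exists_lt_of_lt_ciSup hc
    have := hsub.eventually_div_lt_of_div_lt (L := -c) N.ne_zero (by rw [neg_div]; linarith)
    filter_upwards [this] with n hn
    rw [neg_div] at hn
    linarith
  · filter_upwards [eventually_gt_atTop 0] with n hn
    exact (le_ciSup (Etot_bddAbove hps hσ) ⟨n, hn⟩).trans_lt hc

/-- Dilution of the block length by a factor `p`; the product form of the left side lies below
`ergo (…) / n` also when the block length `⌊p n⌋` vanishes. -/
lemma tendsto_ergo_floor (hps : h.PosSemidef) {σ : Matrix (Fin d) (Fin d) ℂ}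
    (hσ : IsDensity σ) {p : ℝ} (hp : 0 ≤ p) :
    Tendsto (fun n : ℕ => ergo (tpow σ ⌊p * n⌋₊) (hSum h ⌊p * n⌋₊) / ⌊p * n⌋₊ *
      ((⌊p * n⌋₊ : ℝ) / n)) atTop (𝓝 (p * Etot σ h)) := by
  have h1 : Tendsto (fun n : ℕ => (⌊p * n⌋₊ : ℝ) / n) atTop (𝓝 p) :=
    (tendsto_nat_floor_mul_div_atTop hp).comp tendsto_natCast_atTop_atTop
  rcases hp.eq_or_lt with rfl | hp0
  · simp
  · have h2 : Tendsto (fun n : ℕ => ⌊p * (n : ℝ)⌋₊) atTop atTop :=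
      tendsto_nat_floor_atTop.comp (tendsto_natCast_atTop_atTop.const_mul_atTop hp0)
    rw [mul_comm p]
    exact ((tendsto_ergo_tpow hps hσ).comp h2).mul h1

variable {Λ : Matrix (Fin d) (Fin d) ℂ →ₗ[ℂ] Matrix (Fin d) (Fin d) ℂ}

lemma le_E1tot (hps : h.PosSemidef) (hΛ : IsChannel Λ) {ρ : Matrix (Fin d) (Fin d) ℂ}
    (hρ : IsDensity ρ) {e : ℝ} (he : (ρ * h).trace.re ≤ e) : Etot (Λ ρ) h ≤ E1tot Λ h e :=
  le_csSup ⟨lamMax hps.isHermitian, by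
    rintro _ ⟨τ, hτ, -, rfl⟩; exact Etot_le hps (hΛ.isDensity hτ)⟩ ⟨ρ, hρ, he, rfl⟩

lemma E1tot_nonneg (e : ℝ) : 0 ≤ E1tot Λ h e :=
  Real.sSup_nonneg (by rintro _ ⟨τ, -, -, rfl⟩; exact Etot_nonneg _)

lemma E1tot_le (hps : h.PosSemidef) (hΛ : IsChannel Λ) {e : ℝ}
    (hl : 0 ≤ lamMax hps.isHermitian) : E1tot Λ h e ≤ lamMax hps.isHermitian :=
  Real.sSup_le (by rintro _ ⟨τ, hτ, -, rfl⟩; exact Etot_le hps (hΛ.isDensity hτ)) hl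

lemma le_chiTot (hps : h.PosSemidef) (hΛ : IsChannel Λ) (hl : 0 ≤ lamMax hps.isHermitian)
    {ι : Type*} [Fintype ι] {p ev : ι → ℝ} {e : ℝ} (hp : ∀ j, 0 ≤ p j) (hp1 : ∑ j, p j = 1)
    (hev : ∀ j, ev j ∈ Set.Icc (0 : ℝ) (lamMax hps.isHermitian)) (he : ∑ j, p j * ev j ≤ e) :
    ∑ j, p j * E1tot Λ h (ev j) ≤ chiTot Λ h (lamMax hps.isHermitian) e := by
  refine le_csSup ⟨lamMax hps.isHermitian, ?_⟩ ?_
  · rintro _ ⟨m, q, f, hq, hq1, -, -, rfl⟩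
    calc ∑ j, q j * E1tot Λ h (f j) ≤ ∑ j, q j * lamMax hps.isHermitian :=
          Finset.sum_le_sum fun j _ => mul_le_mul_of_nonneg_left (E1tot_le hps hΛ hl) (hq j)
      _ = lamMax hps.isHermitian := by rw [← Finset.sum_mul, hq1, one_mul]
  · let e' := (Fintype.equivFin ι).symm
    refine ⟨Fintype.card ι, p ∘ e', ev ∘ e', fun j => hp _, ?_, fun j => hev _, ?_, ?_⟩
    · exact (e'.sum_comp p).trans hp1
    · exact (e'.sum_comp fun j => p j * ev j).trans_le he
    · exact (e'.sum_comp fun j => p j * E1tot Λ h (ev j)).symm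

lemma chiTot_nonneg (l e : ℝ) : 0 ≤ chiTot Λ h l e :=
  Real.sSup_nonneg (by
    rintro _ ⟨m, q, f, hq, -, -, -, rfl⟩
    exact Finset.sum_nonneg fun j _ => mul_nonneg (hq j) (E1tot_nonneg _))

end Total

/-! ### Pure-state ensembles and block product states -/

section Coding

variable {d : ℕ} {h : Matrix (Fin d) (Fin d) ℂ}
  {Λ : Matrix (Fin d) (Fin d) ℂ →ₗ[ℂ] Matrix (Fin d) (Fin d) ℂ}

lemma SepState.exists_pure {n : ℕ} {ρ : Matrix (Fin n → Fin d) (Fin n → Fin d) ℂ}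
    (hρ : SepState ρ) :
    ∃ (ι : Type) (_ : Fintype ι) (p : ι → ℝ) (ψ : ι → Fin n → Fin d → ℂ),
      (∀ k, 0 ≤ p k) ∧ ∑ k, p k = 1 ∧ (∀ k i, star (ψ k i) ⬝ᵥ ψ k i = 1) ∧
      ρ = ∑ k, (p k : ℂ) • prodMat fun i => vecMulVec (ψ k i) (star (ψ k i)) := by
  obtain ⟨m, p, σs, hp, hp1, hσ, rfl⟩ := hρ
  choose w v hw hw1 hv hdec using fun k i => exists_pure_decomp (hσ k i)
  refine ⟨Fin m × (Fin n → Fin d), inferInstance, fun x => p x.1 * ∏ i, w x.1 i (x.2 i),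
    fun x i => v x.1 i (x.2 i), fun x => mul_nonneg (hp _) (Finset.prod_nonneg fun i _ => hw _ _ _),
    ?_, fun x i => hv _ _ _, ?_⟩
  · rw [Fintype.sum_prod_type]
    rw [← hp1]
    refine Finset.sum_congr rfl fun k _ => ?_
    dsimp only
    rw [← Finset.mul_sum]
    have : ∏ i, ∑ a, w k i a = ∑ c : Fin n → Fin d, ∏ i, w k i (c i) := by
      rw [Finset.prod_univ_sum]; simp
    rw [← this, Finset.prod_eq_one fun i _ => hw1 k i, mul_one]
  · rw [Fintype.sum_prod_type]
    refine Finset.sum_congr rfl fun k _ => ?_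
    have : prodMat (σs k) = ∑ c : Fin n → Fin d, ((∏ i, w k i (c i) : ℝ) : ℂ) •
        prodMat fun i => vecMulVec (v k i (c i)) (star (v k i (c i))) := by
      rw [← prodMat_sum (w k) fun i a => vecMulVec (v k i a) (star (v k i a))]
      exact congrArg _ (funext fun i => hdec k i)
    rw [this, Finset.smul_sum]
    refine Finset.sum_congr rfl fun c _ => ?_
    rw [smul_smul, Complex.ofReal_mul]

lemma SepState.prodMat {n : ℕ} {A : Fin n → Matrix (Fin d) (Fin d) ℂ}
    (hA : ∀ i, IsDensity (A i)) : SepState (prodMat A) :=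
  ⟨1, fun _ => 1, fun _ => A, by simp, by simp, fun _ => hA, by simp⟩

/-- Concatenating blocks of lengths `N j` carrying the states `ρ j`: a product state whose output
ergotropy is at least the sum of those of the blocks. -/
lemma exists_blocks (hps : h.PosSemidef) (hΛ : IsChannel Λ) (m : ℕ) :
    ∀ (N : Fin m → ℕ) (ρ : Fin m → Matrix (Fin d) (Fin d) ℂ), (∀ j, IsDensity (ρ j)) →
    ∃ (n : ℕ) (A : Fin n → Matrix (Fin d) (Fin d) ℂ), n = ∑ j, N j ∧ (∀ i, IsDensity (A i)) ∧
      ∑ i, (A i * h).trace.re = ∑ j, N j * (ρ j * h).trace.re ∧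
      ∑ j, ergo (tpow (Λ (ρ j)) (N j)) (hSum h (N j)) ≤
        ergo (prodMat fun i => Λ (A i)) (hSum h n) := by
  induction m with
  | zero =>
    intro N ρ hρ
    exact ⟨0, Fin.elim0, by simp, fun i => i.elim0, by simp, by simpa using ergo_nonneg _ _⟩
  | succ m ih =>
    intro N ρ hρ
    obtain ⟨n, A, hn, hA, hE, herg⟩ := ih (fun j => N j.succ) (fun j => ρ j.succ) fun j => hρ _
    refine ⟨N 0 + n, Fin.append (fun _ => ρ 0) A, by rw [Fin.sum_univ_succ, hn], ?_, ?_, ?_⟩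
    · intro i
      refine Fin.addCases (fun i => ?_) (fun i => ?_) i
      · simpa using hρ 0
      · simpa using hA i
    · rw [Fin.sum_univ_add, Fin.sum_univ_succ, ← hE]
      simp
    · rw [Fin.sum_univ_succ]
      have happ : (fun i => Λ (Fin.append (fun _ : Fin (N 0) => ρ 0) A i)) =
          Fin.append (fun _ => Λ (ρ 0)) (fun i => Λ (A i)) := by
        funext i
        refine Fin.addCases (fun i => ?_) (fun i => ?_) i <;> simp
      rw [happ]
      exact (add_le_add_right herg _).trans
        (ergo_append hps (fun _ => hΛ.isDensity (hρ 0)) fun i => hΛ.isDensity (hA i))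

variable {Λfam : ∀ n : ℕ, Matrix (Fin n → Fin d) (Fin n → Fin d) ℂ →ₗ[ℂ]
      Matrix (Fin n → Fin d) (Fin n → Fin d) ℂ}

/-- The converse bound: every separable input gives at most `n χ_tot`. -/
lemma ergo_sep_le (hΛ : IsChannel Λ) (hps : h.PosSemidef)
    (hΛfam : ∀ (n : ℕ) (ρs : Fin n → Matrix (Fin d) (Fin d) ℂ),
      Λfam n (prodMat ρs) = prodMat fun i => Λ (ρs i))
    {𝔢 : ℝ} (hl : 0 ≤ lamMax hps.isHermitian) {n : ℕ} (hn : 0 < n)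
    (hopt : ∀ e ∈ Set.Icc (0:ℝ) (lamMax hps.isHermitian),
      ∃ σ : Matrix (Fin d) (Fin d) ℂ, IsDensity σ ∧ (σ * h).trace.re ≤ e ∧
        ∀ ψ : Fin n → (Fin d → ℂ), (∀ i, star (ψ i) ⬝ᵥ ψ i = 1) →
          (∑ i, (star (ψ i) ⬝ᵥ h.mulVec (ψ i)).re) ≤ n * e →
          ergo (Λfam n (prodMat fun i => Matrix.vecMulVec (ψ i) (star (ψ i)))) (hSum h n)
            ≤ ergo (tpow (Λ σ) n) (hSum h n))
    {ρ : Matrix (Fin n → Fin d) (Fin n → Fin d) ℂ} (hρ : SepState ρ)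
    (hE : (ρ * hSum h n).trace.re ≤ n * 𝔢) :
    ergo (Λfam n ρ) (hSum h n) ≤ n * chiTot Λ h (lamMax hps.isHermitian) 𝔢 := by
  have hn' : (0 : ℝ) < n := by exact_mod_cast hn
  obtain ⟨ι, _, p, ψ, hp, hp1, hψ, rfl⟩ := hρ.exists_pure
  have hpure (k : ι) (i : Fin n) := isDensity_pure (hψ k i)
  -- the mean energy per site of the `k`-th pure product state
  set ev : ι → ℝ := fun k => (∑ i, (star (ψ k i) ⬝ᵥ h.mulVec (ψ k i)).re) / n with hev
  have hevI (k : ι) : ev k ∈ Set.Icc (0 : ℝ) (lamMax hps.isHermitian) := by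
    simp only [hev, ← trace_pure_mul]
    constructor
    · exact div_nonneg (Finset.sum_nonneg fun i _ => trace_mul_re_nonneg (hpure k i).1 hps) hn'.le
    · rw [div_le_iff₀ hn', mul_comm]
      refine (Finset.sum_le_sum fun i _ => energy_le hps.isHermitian (hpure k i)).trans ?_
      simp
  have hmean : ∑ k, p k * ev k ≤ 𝔢 := by
    have h1 : ((∑ k, (p k : ℂ) • prodMat fun i => vecMulVec (ψ k i) (star (ψ k i))) *
        hSum h n).trace.re = n * ∑ k, p k * ev k := by
      rw [Matrix.sum_mul, Matrix.trace_sum, Complex.re_sum, Finset.mul_sum]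
      refine Finset.sum_congr rfl fun k _ => ?_
      rw [Matrix.smul_mul, Matrix.trace_smul, smul_eq_mul, Complex.re_ofReal_mul,
        trace_prodMat_mul_hSum (hpure k), Complex.re_sum]
      simp only [hev, trace_pure_mul]
      field_simp
    rw [h1] at hE
    exact le_of_mul_le_mul_left hE hn'
  have hk (k : ι) : ergo (prodMat fun i => Λ (vecMulVec (ψ k i) (star (ψ k i)))) (hSum h n) ≤
      n * E1tot Λ h (ev k) := by
    obtain ⟨σ, hσ, hσe, hσopt⟩ := hopt (ev k) (hevI k)
    have h1 := hσopt (ψ k) (hψ k) (by simp only [hev]; field_simp; exact le_rfl)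
    rw [hΛfam] at h1
    refine h1.trans ((ergo_tpow_le_Etot hps (hΛ.isDensity hσ) hn).trans ?_)
    exact mul_le_mul_of_nonneg_left (le_E1tot hps hΛ hσ hσe) hn'.le
  calc ergo (Λfam n (∑ k, (p k : ℂ) • prodMat fun i => vecMulVec (ψ k i) (star (ψ k i))))
        (hSum h n)
      = ergo (∑ k, (p k : ℂ) • prodMat fun i => Λ (vecMulVec (ψ k i) (star (ψ k i))))
        (hSum h n) := by simp only [map_sum, map_smul, hΛfam]
    _ ≤ ∑ k, p k * ergo (prodMat fun i => Λ (vecMulVec (ψ k i) (star (ψ k i)))) (hSum h n) :=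
        ergo_convex hp (fun k => prodMat_posSemidef fun i => (hΛ.isDensity (hpure k i)).1)
          (hSum_posSemidef hps n)
    _ ≤ ∑ k, p k * (n * E1tot Λ h (ev k)) :=
        Finset.sum_le_sum fun k _ => mul_le_mul_of_nonneg_left (hk k) (hp k)
    _ = n * ∑ k, p k * E1tot Λ h (ev k) := by
        rw [Finset.mul_sum]; exact Finset.sum_congr rfl fun k _ => by ring
    _ ≤ n * chiTot Λ h (lamMax hps.isHermitian) 𝔢 :=
        mul_le_mul_of_nonneg_left (le_chiTot hps hΛ hl hp hp1 hevI hmean) hn'.le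

/-- The direct bound: on `n` sites, use blocks of `⌊p j n⌋` copies of `ρ j`, and fill the
remaining sites with a zero-energy state `σ₀`. -/
lemma exists_sep_ge (hΛ : IsChannel Λ) (hps : h.PosSemidef)
    (hΛfam : ∀ (n : ℕ) (ρs : Fin n → Matrix (Fin d) (Fin d) ℂ),
      Λfam n (prodMat ρs) = prodMat fun i => Λ (ρs i))
    {𝔢 : ℝ} (n : ℕ) {σ₀ : Matrix (Fin d) (Fin d) ℂ}
    (hσ₀ : IsDensity σ₀) (hσ₀e : (σ₀ * h).trace.re ≤ 0) {m : ℕ} {p : Fin m → ℝ}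
    (hp : ∀ j, 0 ≤ p j) (hp1 : ∑ j, p j = 1) {ρ : Fin m → Matrix (Fin d) (Fin d) ℂ}
    (hρ : ∀ j, IsDensity (ρ j)) (hE : ∑ j, p j * (ρ j * h).trace.re ≤ 𝔢) :
    ∃ ρ' : Matrix (Fin n → Fin d) (Fin n → Fin d) ℂ, IsDensity ρ' ∧ SepState ρ' ∧
      (ρ' * hSum h n).trace.re ≤ n * 𝔢 ∧
      ∑ j, ergo (tpow (Λ (ρ j)) ⌊p j * n⌋₊) (hSum h ⌊p j * n⌋₊) ≤
        ergo (Λfam n ρ') (hSum h n) := by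
  have hfl (j : Fin m) : (⌊p j * n⌋₊ : ℝ) ≤ p j * n :=
    Nat.floor_le (mul_nonneg (hp j) (Nat.cast_nonneg n))
  have hle : ∑ j, ⌊p j * n⌋₊ ≤ n := by
    have : ((∑ j, ⌊p j * n⌋₊ : ℕ) : ℝ) ≤ n := by
      push_cast
      refine (Finset.sum_le_sum fun j _ => hfl j).trans ?_
      rw [← Finset.sum_mul, hp1, one_mul]
    exact_mod_cast this
  obtain ⟨n', A, hn', hA, hAE, hAerg⟩ := exists_blocks hps hΛ (m + 1)
    (Fin.cons (n - ∑ j, ⌊p j * n⌋₊) fun j => ⌊p j * n⌋₊) (Fin.cons σ₀ ρ)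
    (fun j => by refine Fin.cases ?_ (fun j => ?_) j <;> simp [hσ₀, hρ])
  simp only [Fin.sum_univ_succ, Fin.cons_zero, Fin.cons_succ] at hn' hAE hAerg
  obtain rfl : n' = n := by omega
  refine ⟨prodMat A, prodMat_isDensity hA, SepState.prodMat hA, ?_, ?_⟩
  · rw [trace_prodMat_mul_hSum hA, Complex.re_sum, hAE]
    have h1 : ((n' - ∑ j, ⌊p j * n'⌋₊ : ℕ) : ℝ) * (σ₀ * h).trace.re ≤ 0 :=
      mul_nonpos_of_nonneg_of_nonpos (Nat.cast_nonneg _) hσ₀e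
    have h2 : ∑ j, (⌊p j * n'⌋₊ : ℝ) * (ρ j * h).trace.re ≤ n' * 𝔢 :=
      calc ∑ j, (⌊p j * n'⌋₊ : ℝ) * (ρ j * h).trace.re
          ≤ ∑ j, p j * n' * (ρ j * h).trace.re := Finset.sum_le_sum fun j _ =>
            mul_le_mul_of_nonneg_right (hfl j) (trace_mul_re_nonneg (hρ j).1 hps)
        _ = n' * ∑ j, p j * (ρ j * h).trace.re := by
            rw [Finset.mul_sum]; exact Finset.sum_congr rfl fun j _ => by ring
        _ ≤ n' * 𝔢 := mul_le_mul_of_nonneg_left hE (Nat.cast_nonneg _)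
    linarith
  · rw [hΛfam]
    refine le_trans ?_ hAerg
    exact le_add_of_nonneg_left (ergo_nonneg _ _)

end Coding

theorem statement14 {d : ℕ} (hd : 0 < d)
    (Λ : Matrix (Fin d) (Fin d) ℂ →ₗ[ℂ] Matrix (Fin d) (Fin d) ℂ) (hΛ : IsChannel Λ)
    (h : Matrix (Fin d) (Fin d) ℂ) (hps : h.PosSemidef)
    (Λfam : ∀ n : ℕ, Matrix (Fin n → Fin d) (Fin n → Fin d) ℂ →ₗ[ℂ]
      Matrix (Fin n → Fin d) (Fin n → Fin d) ℂ)
    (hΛfam : ∀ (n : ℕ) (ρs : Fin n → Matrix (Fin d) (Fin d) ℂ),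
      Λfam n (prodMat ρs) = prodMat fun i => Λ (ρs i))
    (𝔢 : ℝ) (h𝔢 : 𝔢 ∈ Set.Icc (0:ℝ) (lamMax hps.isHermitian))
    (hopt : ∀ e ∈ Set.Icc (0:ℝ) (lamMax hps.isHermitian), ∀ n : ℕ, 1 ≤ n →
      ∃ σ : Matrix (Fin d) (Fin d) ℂ, IsDensity σ ∧ (σ * h).trace.re ≤ e ∧
        ∀ ψ : Fin n → (Fin d → ℂ), (∀ i, star (ψ i) ⬝ᵥ ψ i = 1) →
          (∑ i, (star (ψ i) ⬝ᵥ h.mulVec (ψ i)).re) ≤ n * e →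
          ergo (Λfam n (prodMat fun i => Matrix.vecMulVec (ψ i) (star (ψ i)))) (hSum h n)
            ≤ ergo (tpow (Λ σ) n) (hSum h n))
 :
    Tendsto (fun n : ℕ => EsepN Λfam h n (n * 𝔢) / n) atTop
      (𝓝 (chiTot Λ h (lamMax hps.isHermitian) 𝔢)) := by
  have hl : 0 ≤ lamMax hps.isHermitian := h𝔢.1.trans h𝔢.2
  have hub (n : ℕ) (hn : 0 < n) : ∀ x ∈ {x | ∃ ρ : Matrix (Fin n → Fin d) (Fin n → Fin d) ℂ,
      IsDensity ρ ∧ SepState ρ ∧ (ρ * hSum h n).trace.re ≤ n * 𝔢 ∧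
      x = ergo (Λfam n ρ) (hSum h n)}, x ≤ n * chiTot Λ h (lamMax hps.isHermitian) 𝔢 := by
    rintro _ ⟨ρ, -, hsep, hE, rfl⟩
    exact ergo_sep_le hΛ hps hΛfam hl hn (fun e he => hopt e he n hn) hsep hE
  refine tendsto_order.2 ⟨fun c hc => ?_, fun c hc => ?_⟩
  · -- the hypothesis at `e = 0` supplies a state of vanishing energy
    obtain ⟨σ₀, hσ₀, hσ₀e, -⟩ := hopt 0 ⟨le_rfl, hl⟩ 1 le_rfl
    obtain ⟨_, ⟨m, p, ev, hp, hp1, hev, hpe, rfl⟩, hlt⟩ := exists_lt_of_lt_csSup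
      (by exact ⟨_, 1, fun _ => 1, fun _ => 0, by simp, by simp, by simp [hl],
        by simpa using h𝔢.1, rfl⟩) hc
    set ε := (∑ j, p j * E1tot Λ h (ev j) - c) / 2 with hε
    have hε0 : 0 < ε := by rw [hε]; linarith
    have hex (j : Fin m) : ∃ ρ : Matrix (Fin d) (Fin d) ℂ, IsDensity ρ ∧
        (ρ * h).trace.re ≤ ev j ∧ E1tot Λ h (ev j) - ε < Etot (Λ ρ) h := by
      obtain ⟨_, ⟨ρ, hρ, hρe, rfl⟩, hx⟩ := exists_lt_of_lt_csSup
        (s := {x | ∃ ρ : Matrix (Fin d) (Fin d) ℂ,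
          IsDensity ρ ∧ (ρ * h).trace.re ≤ ev j ∧ x = Etot (Λ ρ) h})
        ⟨_, σ₀, hσ₀, hσ₀e.trans (hev j).1, rfl⟩ (sub_lt_self (E1tot Λ h (ev j)) hε0)
      exact ⟨ρ, hρ, hρe, hx⟩
    choose ρ hρ hρe hρx using hex
    have hE : ∑ j, p j * (ρ j * h).trace.re ≤ 𝔢 :=
      (Finset.sum_le_sum fun j _ => mul_le_mul_of_nonneg_left (hρe j) (hp j)).trans hpe
    have hlim := tendsto_finsetSum (Finset.univ : Finset (Fin m)) fun j _ =>
      tendsto_ergo_floor hps (hΛ.isDensity (hρ j)) (hp j)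
    have hclt : c < ∑ j, p j * Etot (Λ (ρ j)) h := by
      calc c < ∑ j, p j * E1tot Λ h (ev j) - ε := by rw [hε]; linarith
        _ = ∑ j, p j * (E1tot Λ h (ev j) - ε) := by
            simp only [mul_sub, Finset.sum_sub_distrib, ← Finset.sum_mul, hp1, one_mul]
        _ ≤ ∑ j, p j * Etot (Λ (ρ j)) h :=
            Finset.sum_le_sum fun j _ => mul_le_mul_of_nonneg_left (hρx j).le (hp j)
    filter_upwards [hlim.eventually_const_lt hclt, eventually_gt_atTop 0] with n hcn hn
    have hn' : (0 : ℝ) < n := by exact_mod_cast hn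
    obtain ⟨ρ', hd', hs', hE', hge⟩ := exists_sep_ge hΛ hps hΛfam n hσ₀ hσ₀e hp hp1 hρ hE
    have hle : ergo (Λfam n ρ') (hSum h n) ≤ EsepN Λfam h n (n * 𝔢) :=
      le_csSup ⟨_, hub n hn⟩ ⟨ρ', hd', hs', hE', rfl⟩
    refine hcn.trans_le (le_trans ?_ (div_le_div_of_nonneg_right (hge.trans hle) hn'.le))
    rw [Finset.sum_div]
    refine Finset.sum_le_sum fun j _ => ?_
    rcases Nat.eq_zero_or_pos ⌊p j * n⌋₊ with h0 | h0
    · rw [h0]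
      simpa using div_nonneg (ergo_nonneg _ _) hn'.le
    · have : (0 : ℝ) < ⌊p j * n⌋₊ := by exact_mod_cast h0
      exact (div_mul_div_cancel₀ this.ne').le
  · filter_upwards [eventually_gt_atTop 0] with n hn
    have hn' : (0 : ℝ) < n := by exact_mod_cast hn
    refine lt_of_le_of_lt ?_ hc
    rw [div_le_iff₀ hn', mul_comm (chiTot _ _ _ _)]
    exact Real.sSup_le (hub n hn) (mul_nonneg hn'.le (chiTot_nonneg _ _))

end
end
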